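/- arXiv:2601.08359 — 2 statements merged into one kernel-verified Lean document; each statement's English description precedes it below -/
import Mathlib

section
/- Let W ⊆ ⟦𝕐⟧ satisfy μH^{1/2}(W) < √(1/2), where μH^{1/2} denotes the (1/2)-dimensional Hausdorff outer measure with respect to the metric d₂. Then Player II has a winning pure strategy in the binary Gale–Stewart game with target set W; in particular, the game with target set W is determined. -/
open Metric Set Filter MeasureTheory

noncomputable local instance : MetricSpace (ℕ → Bool) := PiNat.metricSpace
local instance (priority := high) : MeasurableSpace (ℕ → Bool) := borel _
local instance : BorelSpace (ℕ → Bool) := ⟨rfl⟩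

/-- The finite prefix `⟨x 0, …, x (n-1)⟩` of a play. -/
def prefixList (x : ℕ → Bool) (n : ℕ) : List Bool := List.ofFn fun i : Fin n => x i

/-- `x` is a play consistent with the Player I pure strategy `sI`. -/
def ConsistentI (sI : List Bool → Bool) (x : ℕ → Bool) : Prop :=
  ∀ n : ℕ, Even n → x n = sI (prefixList x n)

/-- `x` is a play consistent with the Player II pure strategy `sII`. -/
def ConsistentII (sII : List Bool → Bool) (x : ℕ → Bool) : Prop :=
  ∀ n : ℕ, Odd n → x n = sII (prefixList x n)

/-!
Give each string `l` the total weight `m l` of the cylinders in a countable cover of `W` whose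
base points extend `l`, a cylinder of length `n` having weight `2 ^ (-⌊n / 2⌋)`. By always moving
to the lighter child, Player II at least halves `m` in each round, so after `k` rounds `m` is at
most `2 ^ (-k)` times the total weight. A play entering a cylinder of length `n` would have
`m ≥ 2 ^ (-⌊n / 2⌋)` after `⌊n / 2⌋` rounds, which is impossible if the total weight is less
than `1`.

A set of positive diameter lies in a cylinder of the same diameter `2 ^ (-n)`, and for
`0 < d ≤ 1 / 2` one has `2 ^ (-⌊n / 2⌋) ≤ 2 ^ d * (2 ^ (-n)) ^ d`, with equality at `n = 1`. So a
cover by sets with `∑ diam ^ d < 2 ^ (-d)` suffices, whatever the diameters of its members.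
-/

open scoped ENNReal

section HausdorffContent

variable {X : Type*} [PseudoEMetricSpace X]

/-- The `d`-dimensional Hausdorff content `ℋ^d_∞`: the Hausdorff outer measure without the
requirement that the sets of a cover be small. As for `μH[d]`, empty sets in a cover cost nothing
even if `d ≤ 0`. -/
noncomputable def hausdorffContent (d : ℝ) : OuterMeasure X :=
  OuterMeasure.boundedBy fun s => ediam s ^ d

theorem hausdorffContent_apply {d : ℝ} (hd : 0 < d) (s : Set X) :
    hausdorffContent d s = ⨅ (t : ℕ → Set X) (_ : s ⊆ ⋃ i, t i), ∑' i, ediam (t i) ^ d := by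
  rw [hausdorffContent, OuterMeasure.boundedBy_eq_ofFunction (by simp [hd]),
    OuterMeasure.ofFunction_apply]

theorem exists_cover_tsum_rpow_lt_of_hausdorffContent_lt {d : ℝ} (hd : 0 < d) {s : Set X}
    {c : ℝ≥0∞} (h : hausdorffContent d s < c) :
    ∃ (t : ℕ → Set X) (r : ℕ → ℝ≥0∞), s ⊆ ⋃ i, t i ∧ (∀ i, r i ≠ 0) ∧ (∀ i, ediam (t i) ≤ r i) ∧
      ∑' i, r i ^ d < c := by
  simp only [hausdorffContent_apply hd, iInf_lt_iff] at h
  obtain ⟨t, hst, hsum⟩ := h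
  obtain ⟨ε, hε, hεsum⟩ := ENNReal.exists_pos_sum_of_countable' (tsub_pos_of_lt hsum).ne' ℕ
  refine ⟨t, fun i => (ediam (t i) ^ d + ε i) ^ d⁻¹, hst, fun i => ?_, fun i => ?_, ?_⟩
  · simp [ENNReal.rpow_eq_zero_iff, (hε i).ne', hd.le]
  · exact (ENNReal.le_rpow_inv_iff hd).2 le_self_add
  · simp only [ENNReal.rpow_inv_rpow hd.ne', ENNReal.tsum_add]
    rw [add_comm]
    exact lt_tsub_iff_right.1 hεsum

theorem hausdorffContent_le_hausdorffMeasure {X : Type*} [EMetricSpace X] [MeasurableSpace X]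
    [BorelSpace X] (d : ℝ) (s : Set X) : hausdorffContent d s ≤ μH[d] s := by
  have hle : hausdorffContent d ≤ (OuterMeasure.mkMetric fun r => r ^ d : OuterMeasure X) :=
    OuterMeasure.le_mkMetric (fun r => r ^ d) _ ⊤ ENNReal.zero_lt_top
      fun t _ => OuterMeasure.boundedBy_le t
  calc hausdorffContent d s ≤ OuterMeasure.mkMetric (fun r => r ^ d) s := hle s
    _ = μH[d] s := congrFun (OuterMeasure.coe_mkMetric _) s

end HausdorffContent

section Cylinder

attribute [local instance] PiNat.metricSpace

variable {E : ℕ → Type*} [∀ n, TopologicalSpace (E n)] [∀ n, DiscreteTopology (E n)]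

theorem mem_cylinder_succ_of_edist_lt {x y : ∀ n, E n} {n : ℕ}
    (h : edist y x < (2⁻¹ : ℝ≥0∞) ^ n) : y ∈ PiNat.cylinder x (n + 1) := by
  have hdist : dist y x < (1 / 2) ^ n := by
    rw [edist_dist, ← ENNReal.ofReal_ofNat 2, ← ENNReal.ofReal_inv_of_pos two_pos,
      ← ENNReal.ofReal_pow (by norm_num), ENNReal.ofReal_lt_ofReal_iff (by positivity)] at h
    rwa [one_div]
  exact fun i hi => PiNat.apply_eq_of_dist_lt hdist (Nat.lt_succ_iff.1 hi)

theorem exists_cylinder_superset_of_ediam_le [Nonempty (∀ n, E n)] {t : Set (∀ n, E n)}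
    {r : ℝ≥0∞} (hr : r ≠ 0) (ht : ediam t ≤ r) :
    ∃ x n, t ⊆ PiNat.cylinder x n ∧ (2⁻¹ : ℝ≥0∞) ^ n ≤ r := by
  obtain ⟨x, hx⟩ : ∃ x, ∀ y ∈ t, edist y x ≤ r := by
    rcases t.eq_empty_or_nonempty with rfl | ⟨x, hx⟩
    · simp
    · exact ⟨x, fun y hy => (edist_le_ediam_of_mem hy hx).trans ht⟩
  have hsmall : ∃ n : ℕ, (2⁻¹ : ℝ≥0∞) ^ n ≤ r :=
    (ENNReal.exists_inv_two_pow_lt hr).imp fun _ => le_of_lt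
  classical
  refine ⟨x, Nat.find hsmall, fun y hy => ?_, Nat.find_spec hsmall⟩
  rcases hn : Nat.find hsmall with _ | n
  · simp
  · have hrn : r < 2⁻¹ ^ n := not_le.1 (Nat.find_min hsmall (by omega))
    exact mem_cylinder_succ_of_edist_lt ((hx y hy).trans_lt hrn)

theorem exists_cylinder_cover_of_hausdorffContent_lt [Nonempty (∀ n, E n)] {d : ℝ} (hd : 0 < d)
    {W : Set (∀ n, E n)} {c : ℝ≥0∞} (h : hausdorffContent d W < c) :
    ∃ (a : ℕ → ∀ n, E n) (n : ℕ → ℕ), W ⊆ ⋃ i, PiNat.cylinder (a i) (n i) ∧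
      ∑' i, ((2⁻¹ : ℝ≥0∞) ^ n i) ^ d < c := by
  obtain ⟨t, r, hWt, hr, htr, hsum⟩ := exists_cover_tsum_rpow_lt_of_hausdorffContent_lt hd h
  choose a n hta hnr using fun i => exists_cylinder_superset_of_ediam_le (hr i) (htr i)
  refine ⟨a, n, hWt.trans (iUnion_mono hta), lt_of_le_of_lt ?_ hsum⟩
  gcongr with i
  exact hnr i

end Cylinder

section PrefixList

variable (x y : ℕ → Bool) (n : ℕ)

@[simp]
theorem prefixList_zero : prefixList x 0 = [] := rfl

theorem prefixList_succ : prefixList x (n + 1) = prefixList x n ++ [x n] :=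
  List.ofFn_succ_last

@[simp]
theorem length_prefixList : (prefixList x n).length = n :=
  List.length_ofFn

variable {x y n}

theorem prefixList_eq_prefixList_iff :
    prefixList x n = prefixList y n ↔ x ∈ PiNat.cylinder y n := by
  simp only [prefixList, List.ofFn_inj, funext_iff, Fin.forall_iff, PiNat.mem_cylinder_iff]

end PrefixList

/-- A semimeasure on binary strings, in the sense of algorithmic information theory (but without
the normalization `m [] ≤ 1`): a position value that some next move at least halves. -/
def IsSemimeasure (m : List Bool → ℝ≥0∞) : Prop :=
  ∀ l, m (l ++ [true]) + m (l ++ [false]) ≤ m l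

/-- The strategy of always moving to the child of smaller `m`, by which Player II forces `m` to
decay along the play; ties are resolved in favour of `true`. -/
noncomputable def lighterBit (m : List Bool → ℝ≥0∞) (l : List Bool) : Bool :=
  decide (m (l ++ [true]) ≤ m (l ++ [false]))

namespace IsSemimeasure

variable {m : List Bool → ℝ≥0∞}

theorem append_singleton_le (hm : IsSemimeasure m) (l : List Bool) (b : Bool) :
    m (l ++ [b]) ≤ m l := by
  cases b
  · exact le_add_self.trans (hm l)
  · exact le_self_add.trans (hm l)

theorem two_mul_append_lighterBit_le (hm : IsSemimeasure m) (l : List Bool) :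
    2 * m (l ++ [lighterBit m l]) ≤ m l := by
  refine le_trans ?_ (hm l)
  rw [two_mul]
  rcases le_or_gt (m (l ++ [true])) (m (l ++ [false])) with h | h
  · rw [lighterBit, decide_eq_true h]
    gcongr
  · rw [lighterBit, decide_eq_false h.not_ge]
    gcongr

theorem two_pow_mul_prefixList_le (hm : IsSemimeasure m) {x : ℕ → Bool}
    (hx : ConsistentII (lighterBit m) x) (k : ℕ) :
    2 ^ k * m (prefixList x (2 * k)) ≤ m [] := by
  induction k with
  | zero => simp
  | succ k ih =>
    have hround : 2 * m (prefixList x (2 * k + 2)) ≤ m (prefixList x (2 * k)) := calc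
      2 * m (prefixList x (2 * k + 2)) ≤ m (prefixList x (2 * k + 1)) := by
        rw [prefixList_succ x (2 * k + 1), hx _ (odd_two_mul_add_one k)]
        exact hm.two_mul_append_lighterBit_le _
      _ ≤ m (prefixList x (2 * k)) := by
        rw [prefixList_succ]
        exact hm.append_singleton_le _ _
    calc 2 ^ (k + 1) * m (prefixList x (2 * (k + 1)))
        = 2 ^ k * (2 * m (prefixList x (2 * k + 2))) := by rw [pow_succ, mul_assoc, mul_add_one]
      _ ≤ 2 ^ k * m (prefixList x (2 * k)) := by gcongr
      _ ≤ m [] := ih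

end IsSemimeasure

section PrefixWeight

variable {ι : Type*} (a : ι → ℕ → Bool) (w : ι → ℝ≥0∞)

/-- The total weight of those points among the `a i`, with weights `w i`, that extend `l`:
the value Player II makes small in order to keep the play away from the `a i`. -/
noncomputable def prefixWeight (l : List Bool) : ℝ≥0∞ :=
  ∑' i, if prefixList (a i) l.length = l then w i else 0

theorem prefixWeight_nil : prefixWeight a w [] = ∑' i, w i := by
  simp [prefixWeight]

theorem isSemimeasure_prefixWeight : IsSemimeasure (prefixWeight a w) := by
  intro l
  unfold prefixWeight
  rw [← ENNReal.tsum_add]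
  refine ENNReal.tsum_le_tsum fun i => ?_
  simp only [List.length_append, List.length_singleton, prefixList_succ]
  cases a i l.length <;> by_cases hl : prefixList (a i) l.length = l <;> simp [hl]

variable {a}

theorem le_prefixWeight_of_mem_cylinder {x : ℕ → Bool} {n : ℕ} {i : ι}
    (h : x ∈ PiNat.cylinder (a i) n) : w i ≤ prefixWeight a w (prefixList x n) := by
  refine le_trans ?_ (ENNReal.le_tsum i)
  simp [prefixList_eq_prefixList_iff.2 ((PiNat.mem_cylinder_comm _ _ _).1 h)]

end PrefixWeight

theorem exists_strategyII_avoiding_cylinders {ι : Type*} (a : ι → ℕ → Bool) (n : ι → ℕ)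
    (h : ∑' i, (2⁻¹ : ℝ≥0∞) ^ (n i / 2) < 1) :
    ∃ sII : List Bool → Bool, ∀ x, ConsistentII sII x → ∀ i, x ∉ PiNat.cylinder (a i) (n i) := by
  let w : ι → ℝ≥0∞ := fun i => 2⁻¹ ^ (n i / 2)
  refine ⟨lighterBit (prefixWeight a w), fun x hx i hxi => h.not_ge ?_⟩
  have hxi' : x ∈ PiNat.cylinder (a i) (2 * (n i / 2)) :=
    PiNat.cylinder_anti _ (Nat.mul_div_le _ _) hxi
  calc 1 = 2 ^ (n i / 2) * w i := by
        rw [← mul_pow, ENNReal.mul_inv_cancel two_ne_zero ENNReal.ofNat_ne_top, one_pow]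
    _ ≤ 2 ^ (n i / 2) * prefixWeight a w (prefixList x (2 * (n i / 2))) := by
        gcongr
        exact le_prefixWeight_of_mem_cylinder w hxi'
    _ ≤ prefixWeight a w [] := (isSemimeasure_prefixWeight a w).two_pow_mul_prefixList_le hx _
    _ = ∑' i, w i := prefixWeight_nil a w

theorem inv_two_pow_half_le {d : ℝ} (hd₀ : 0 ≤ d) (hd : d ≤ 1 / 2) (n : ℕ) :
    (2⁻¹ : ℝ≥0∞) ^ (n / 2) ≤ 2 ^ d * ((2⁻¹ : ℝ≥0∞) ^ n) ^ d := by
  have hexp : -((n / 2 : ℕ) : ℝ) ≤ d - n * d := by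
    rcases n with _ | n
    · simpa using hd₀
    · have hn : (n : ℝ) ≤ 2 * ((n + 1) / 2 : ℕ) := by
        exact_mod_cast (by omega : n ≤ 2 * ((n + 1) / 2))
      push_cast
      nlinarith [mul_le_mul_of_nonneg_left hd n.cast_nonneg]
  calc (2⁻¹ : ℝ≥0∞) ^ (n / 2) = 2 ^ (-((n / 2 : ℕ) : ℝ)) := by
        rw [ENNReal.rpow_neg, ENNReal.rpow_natCast, ENNReal.inv_pow]
    _ ≤ 2 ^ (d - n * d) := ENNReal.rpow_le_rpow_of_exponent_le one_le_two hexp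
    _ = 2 ^ d * ((2⁻¹ : ℝ≥0∞) ^ n) ^ d := by
        rw [sub_eq_add_neg, ENNReal.rpow_add _ _ two_ne_zero ENNReal.ofNat_ne_top,
          ENNReal.rpow_neg, ENNReal.rpow_mul, ENNReal.rpow_natCast, ← ENNReal.inv_rpow,
          ENNReal.inv_pow]

theorem playerII_wins_of_hausdorffMeasure_lt_general {d : ℝ} (hd₀ : 0 < d) (hd : d ≤ 1 / 2)
    {W : Set (ℕ → Bool)} (hW : hausdorffContent d W < 2⁻¹ ^ d) :
    ∃ sII : List Bool → Bool, ∀ x : ℕ → Bool, ConsistentII sII x → x ∉ W := by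
  obtain ⟨a, n, hWa, hsum⟩ := exists_cylinder_cover_of_hausdorffContent_lt hd₀ hW
  have hlt : ∑' i, (2⁻¹ : ℝ≥0∞) ^ (n i / 2) < 1 := calc
    ∑' i, (2⁻¹ : ℝ≥0∞) ^ (n i / 2) ≤ ∑' i, 2 ^ d * ((2⁻¹ : ℝ≥0∞) ^ n i) ^ d :=
      ENNReal.tsum_le_tsum fun i => inv_two_pow_half_le hd₀.le hd (n i)
    _ = 2 ^ d * ∑' i, ((2⁻¹ : ℝ≥0∞) ^ n i) ^ d := ENNReal.tsum_mul_left
    _ < 1 := ENNReal.mul_lt_of_lt_div' (by rwa [one_div, ← ENNReal.inv_rpow])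
  obtain ⟨sII, hsII⟩ := exists_strategyII_avoiding_cylinders a n hlt
  refine ⟨sII, fun x hx hxW => ?_⟩
  obtain ⟨i, hi⟩ := mem_iUnion.1 (hWa hxW)
  exact hsII x hx i hi

theorem ofReal_sqrt_one_half : ENNReal.ofReal (Real.sqrt (1 / 2)) = 2⁻¹ ^ (1 / 2 : ℝ) := by
  rw [Real.sqrt_eq_rpow, ← ENNReal.ofReal_rpow_of_pos one_half_pos, one_div,
    ENNReal.ofReal_inv_of_pos two_pos, ENNReal.ofReal_ofNat]

/-- If the `(1/2)`-dimensional Hausdorff measure of `W` is `< √(1/2)` then Player II has a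
winning pure strategy in the binary Gale–Stewart game with target set `W`; in particular the
game is determined. -/
theorem playerII_wins_of_hausdorffMeasure_lt (W : Set (ℕ → Bool))
    (hW : μH[(1 / 2 : ℝ)] W < ENNReal.ofReal (Real.sqrt (1 / 2))) :
    (∃ sII : List Bool → Bool, ∀ x : ℕ → Bool, ConsistentII sII x → x ∉ W) ∧
    ((∃ sI : List Bool → Bool, ∀ x : ℕ → Bool, ConsistentI sI x → x ∈ W) ∨
      (∃ sII : List Bool → Bool, ∀ x : ℕ → Bool, ConsistentII sII x → x ∉ W)) := by
  have hwin := playerII_wins_of_hausdorffMeasure_lt_general one_half_pos le_rfl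
    ((hausdorffContent_le_hausdorffMeasure _ W).trans_lt (hW.trans_eq ofReal_sqrt_one_half))
  exact ⟨hwin, Or.inr hwin⟩
end

section
/- Let s_I be any pure strategy of Player I and let p be a finite binary sequence of even length 2k. Then P_{s_I}(⟦𝕐_p⟧) ≤ 2^(−k). -/
open Metric Set Filter MeasureTheory

/-- The cylinder `⟦𝕐_p⟧` of all plays extending the finite binary sequence `p`. -/
def cyl (p : List Bool) : Set (ℕ → Bool) := {x : ℕ → Bool | ∀ i : Fin p.length, x i = p.get i}

/-- The play produced when Player I follows the strategy `s` and Player II plays the odd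
coordinates of `b`. -/
noncomputable def phi (s : List Bool → Bool) (b : ℕ → Bool) : ℕ → Bool := fun n =>
  Nat.strongRecOn n fun n ih =>
    if Even n then s (List.ofFn fun i : Fin n => ih i i.isLt) else b n

/-- `μ` is the infinite product over `ℕ` of the uniform probability measure on `{0,1}`. -/
def IsUniformProduct (μ : Measure (ℕ → Bool)) : Prop :=
  ∀ (s : Finset ℕ) (f : ℕ → Bool), μ {b : ℕ → Bool | ∀ i ∈ s, b i = f i} = (1 / 2) ^ s.card

/-! Player I controls only the even coordinates of the play, so the odd coordinates are exactly the
coin tosses at odd times. A prefix of length `n` fixes `⌊n / 2⌋` odd coordinates, and these take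
prescribed values with probability `2 ^ (-⌊n / 2⌋)`, whatever the strategy does in between. -/

theorem phi_of_even (s : List Bool → Bool) (b : ℕ → Bool) {n : ℕ} (hn : Even n) :
    phi s b n = s (List.ofFn fun i : Fin n => phi s b i) := by
  unfold phi
  rw [Nat.strongRecOn_eq, if_pos hn]

theorem phi_of_odd (s : List Bool → Bool) (b : ℕ → Bool) {n : ℕ} (hn : Odd n) :
    phi s b n = b n := by
  unfold phi
  rw [Nat.strongRecOn_eq, if_neg (Nat.not_even_iff_odd.mpr hn)]

theorem measurable_phi (s : List Bool → Bool) : Measurable (phi s) := by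
  refine measurable_pi_iff.mpr fun n => ?_
  induction n using Nat.strong_induction_on with
  | _ n ih =>
    rcases Nat.even_or_odd n with hn | hn
    · simp only [phi_of_even s _ hn]
      have measurable_history : Measurable fun b => fun i : Fin n => phi s b i :=
        measurable_pi_iff.mpr fun i => ih i i.isLt
      have measurable_reply : Measurable fun h : Fin n → Bool => s (List.ofFn h) :=
        Measurable.of_discrete
      exact measurable_reply.comp measurable_history
    · simp only [phi_of_odd s _ hn]
      exact measurable_pi_apply n

theorem IsUniformProduct.map_phi_forall_mem_eq {μ : Measure (ℕ → Bool)}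
    (hμ : IsUniformProduct μ) (s : List Bool → Bool) {t : Finset ℕ} (ht : ∀ i ∈ t, Odd i)
    (f : ℕ → Bool) :
    μ.map (phi s) {x | ∀ i ∈ t, x i = f i} = (1 / 2) ^ t.card := by
  have preimage_eq :
      phi s ⁻¹' {x | ∀ i ∈ t, x i = f i} = {b | ∀ i ∈ t, b i = f i} := by
    ext b
    exact forall₂_congr fun i hi => by rw [phi_of_odd s b (ht i hi)]
  have measurableSet_box : MeasurableSet {x : ℕ → Bool | ∀ i ∈ t, x i = f i} :=
    MeasurableSet.pi t.countable_toSet fun i _ => measurableSet_singleton (f i)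
  rw [Measure.map_apply (measurable_phi s) measurableSet_box, preimage_eq, hμ]

theorem cyl_subset_forall_mem_eq {p : List Bool} {t : Finset ℕ} (ht : ∀ i ∈ t, i < p.length) :
    cyl p ⊆ {x | ∀ i ∈ t, x i = p.getD i false} := by
  intro x hx i hi
  rw [List.getD_eq_getElem _ _ (ht i hi)]
  exact hx ⟨i, ht i hi⟩

theorem card_filter_odd_range (n : ℕ) : ((Finset.range n).filter Odd).card = n / 2 := by
  induction n with
  | zero => rfl
  | succ n ih =>
    rw [Finset.range_add_one, Finset.filter_insert]
    split_ifs with hn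
    · rw [Finset.card_insert_of_notMem (by simp), ih, Nat.succ_div_of_dvd hn.add_one.two_dvd]
    · have not_dvd : ¬2 ∣ n + 1 := fun h => hn (by grind)
      rw [ih, Nat.succ_div_of_not_dvd not_dvd]

theorem law_cylinder_le_general (s : List Bool → Bool) (μ : Measure (ℕ → Bool))
    (hμ : IsUniformProduct μ) (p : List Bool) :
    μ.map (phi s) (cyl p) ≤ (1 / 2) ^ (p.length / 2) := by
  let t := (Finset.range p.length).filter Odd
  have lt_length : ∀ i ∈ t, i < p.length := fun i hi =>
    Finset.mem_range.mp (Finset.mem_filter.mp hi).1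
  have odd_of_mem : ∀ i ∈ t, Odd i := fun i hi => (Finset.mem_filter.mp hi).2
  calc μ.map (phi s) (cyl p)
      ≤ μ.map (phi s) {x | ∀ i ∈ t, x i = p.getD i false} :=
        measure_mono (cyl_subset_forall_mem_eq lt_length)
    _ = (1 / 2) ^ t.card := hμ.map_phi_forall_mem_eq s odd_of_mem _
    _ = (1 / 2) ^ (p.length / 2) := by rw [card_filter_odd_range]

/-- For every Player I strategy `sI` and every cylinder on a prefix `p` of even length `2k`,
the law `P_{sI}` of the play against fair coin tosses gives the cylinder measure at
most `2^(-k)`. -/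
theorem law_cylinder_le (sI : List Bool → Bool) (μ : Measure (ℕ → Bool))
    (hμ : IsUniformProduct μ) (p : List Bool) (k : ℕ) (hp : p.length = 2 * k) :
    μ.map (phi sI) (cyl p) ≤ (1 / 2) ^ k := by
  have hk : p.length / 2 = k := by omega
  exact hk ▸ law_cylinder_le_general sI μ hμ p
end
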